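/- Under the Setup, if equations (36a), (36b), (36c) hold on O, then equations (N.9a), (N.9b), (N.9c) hold on O. -/

import Mathlib

open Real

/-- Partial derivative in the first coordinate `ϖ`. -/
noncomputable def d1 (f : ℝ × ℝ → ℝ) : ℝ × ℝ → ℝ := fun p => fderiv ℝ f p (1, 0)

/-- Partial derivative in the second coordinate `z`. -/
noncomputable def d3 (f : ℝ × ℝ → ℝ) : ℝ × ℝ → ℝ := fun p => fderiv ℝ f p (0, 1)

/-!
Write `⟨g, h⟩` for the inner product of gradients, `L h = div (∇h / Π)` and
`T h = L h + h Σ / Π³`, so that (36a), (36b), (36c) prescribe `T f`, `T k`, `T l`. Three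
combinations isolate the reduced equations. Substituting `f = e^{2F}` and the value of `Σ`, the left
side of (N.9a) is `(Π / 2f) T f`. As `k = -fA`, the `Σ` terms cancel in `T k + A T f`, and the left
side of (N.9b) is `-(Π / f) (T k + A T f)`. Finally, `L` applied to `f l + k² = Π²` yields
`f T l + l T f + 2 k T k = 2 ΔΠ`. The same combinations of the sources simplify by algebra alone.
-/

open scoped Topology

section FrameCalculus

variable {V ι : Type*} [NormedAddCommGroup V] [NormedSpace ℝ V] [Fintype ι]
  {e : ι → V} {g h u w : V → ℝ} {p : V}

/-- The inner product of the gradients of `g` and `h`, as measured by the directions `e i`: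
for the standard basis of the plane this is `∂₁g ∂₁h + ∂₃g ∂₃h`. -/
noncomputable def gradInner (e : ι → V) (g h : V → ℝ) (p : V) : ℝ :=
  ∑ i, fderiv ℝ g p (e i) * fderiv ℝ h p (e i)

/-- The sum of the second derivatives of `h` along the directions `e i`: for the standard basis of
the plane this is the flat Laplacian. -/
noncomputable def frameLaplacian (e : ι → V) (h : V → ℝ) (p : V) : ℝ :=
  ∑ i, fderiv ℝ (fun q => fderiv ℝ h q (e i)) p (e i)

/-- The divergence of `∇h / w` with respect to the directions `e i`, the second-order part of the
Ricci components of the Killing block when `w = Π`. -/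
noncomputable def weightedLaplacian (e : ι → V) (w h : V → ℝ) (p : V) : ℝ :=
  ∑ i, fderiv ℝ (fun q => fderiv ℝ h q (e i) / w q) p (e i)

theorem gradInner_comm (e : ι → V) (g h : V → ℝ) (p : V) :
    gradInner e g h p = gradInner e h g p := by
  simp only [gradInner, mul_comm]

theorem gradInner_const_mul_right (hh : DifferentiableAt ℝ h p) (a : ℝ) :
    gradInner e u (fun q => a * h q) p = a * gradInner e u h p := by
  simp only [gradInner, fderiv_const_mul hh, smul_apply, smul_eq_mul,
    Finset.mul_sum, mul_left_comm]

theorem gradInner_add_right (hg : DifferentiableAt ℝ g p) (hh : DifferentiableAt ℝ h p) :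
    gradInner e u (fun q => g q + h q) p = gradInner e u g p + gradInner e u h p := by
  simp only [gradInner, fderiv_fun_add hg hh, add_apply, mul_add,
    Finset.sum_add_distrib]

theorem gradInner_mul_right (hg : DifferentiableAt ℝ g p) (hh : DifferentiableAt ℝ h p) :
    gradInner e u (fun q => g q * h q) p = g p * gradInner e u h p + h p * gradInner e u g p := by
  simp only [gradInner, fderiv_fun_mul hg hh, add_apply,
    smul_apply, smul_eq_mul, mul_add, Finset.sum_add_distrib, Finset.mul_sum,
    mul_left_comm]

theorem gradInner_sq_right (hg : DifferentiableAt ℝ g p) :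
    gradInner e u (fun q => g q ^ 2) p = 2 * g p * gradInner e u g p := by
  simp only [sq, gradInner_mul_right hg hg]
  ring

theorem gradInner_exp_right (hg : DifferentiableAt ℝ g p) :
    gradInner e u (fun q => exp (g q)) p = exp (g p) * gradInner e u g p := by
  simp only [gradInner, fderiv_exp hg, smul_apply, smul_eq_mul,
    Finset.mul_sum, mul_left_comm]

theorem eventually_differentiableAt_of_contDiffAt_two (hg : ContDiffAt ℝ 2 g p) :
    ∀ᶠ q in 𝓝 p, DifferentiableAt ℝ g q :=
  (hg.eventually (by simp)).mono fun _ hq => hq.differentiableAt two_ne_zero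

theorem differentiableAt_fderiv_apply (hg : ContDiffAt ℝ 2 g p) (v : V) :
    DifferentiableAt ℝ (fun q => fderiv ℝ g q v) p :=
  ((hg.fderiv_right (m := 1) (by norm_num)).differentiableAt one_ne_zero).clm_apply
    (differentiableAt_const v)

theorem frameLaplacian_const_mul (hg : ContDiffAt ℝ 2 g p) (a : ℝ) :
    frameLaplacian e (fun q => a * g q) p = a * frameLaplacian e g p := by
  simp only [frameLaplacian, Finset.mul_sum]
  refine Finset.sum_congr rfl fun i _ => ?_
  have hderiv : (fun q => fderiv ℝ (fun x => a * g x) q (e i)) =ᶠ[𝓝 p]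
      fun q => a * fderiv ℝ g q (e i) := by
    filter_upwards [eventually_differentiableAt_of_contDiffAt_two hg] with q hgq
    simp [fderiv_const_mul hgq]
  rw [hderiv.fderiv_eq, fderiv_const_mul (differentiableAt_fderiv_apply hg _)]
  simp

theorem frameLaplacian_add (hg : ContDiffAt ℝ 2 g p) (hh : ContDiffAt ℝ 2 h p) :
    frameLaplacian e (fun q => g q + h q) p = frameLaplacian e g p + frameLaplacian e h p := by
  simp only [frameLaplacian, ← Finset.sum_add_distrib]
  refine Finset.sum_congr rfl fun i _ => ?_
  have hderiv : (fun q => fderiv ℝ (fun x => g x + h x) q (e i)) =ᶠ[𝓝 p]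
      fun q => fderiv ℝ g q (e i) + fderiv ℝ h q (e i) := by
    filter_upwards [eventually_differentiableAt_of_contDiffAt_two hg,
      eventually_differentiableAt_of_contDiffAt_two hh] with q hgq hhq
    simp [fderiv_fun_add hgq hhq]
  rw [hderiv.fderiv_eq, fderiv_fun_add (differentiableAt_fderiv_apply hg _)
    (differentiableAt_fderiv_apply hh _)]
  simp

theorem frameLaplacian_mul (hg : ContDiffAt ℝ 2 g p) (hh : ContDiffAt ℝ 2 h p) :
    frameLaplacian e (fun q => g q * h q) p =
      g p * frameLaplacian e h p + h p * frameLaplacian e g p + 2 * gradInner e g h p := by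
  simp only [frameLaplacian, gradInner, Finset.mul_sum, ← Finset.sum_add_distrib]
  refine Finset.sum_congr rfl fun i _ => ?_
  have hderiv : (fun q => fderiv ℝ (fun x => g x * h x) q (e i)) =ᶠ[𝓝 p]
      fun q => g q * fderiv ℝ h q (e i) + h q * fderiv ℝ g q (e i) := by
    filter_upwards [eventually_differentiableAt_of_contDiffAt_two hg,
      eventually_differentiableAt_of_contDiffAt_two hh] with q hgq hhq
    simp [fderiv_fun_mul hgq hhq]
  have hg₀ := hg.differentiableAt two_ne_zero
  have hh₀ := hh.differentiableAt two_ne_zero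
  have hg₁ := differentiableAt_fderiv_apply hg (e i)
  have hh₁ := differentiableAt_fderiv_apply hh (e i)
  rw [hderiv.fderiv_eq, fderiv_fun_add (hg₀.fun_mul hh₁) (hh₀.fun_mul hg₁), fderiv_fun_mul hg₀ hh₁,
    fderiv_fun_mul hh₀ hg₁]
  simp only [add_apply, smul_apply, smul_eq_mul]
  ring

theorem frameLaplacian_sq (hg : ContDiffAt ℝ 2 g p) :
    frameLaplacian e (fun q => g q ^ 2) p =
      2 * g p * frameLaplacian e g p + 2 * gradInner e g g p := by
  simp only [sq, frameLaplacian_mul hg hg]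
  ring

theorem frameLaplacian_exp (hg : ContDiffAt ℝ 2 g p) :
    frameLaplacian e (fun q => exp (g q)) p =
      exp (g p) * (frameLaplacian e g p + gradInner e g g p) := by
  simp only [frameLaplacian, gradInner, ← Finset.sum_add_distrib, Finset.mul_sum]
  refine Finset.sum_congr rfl fun i _ => ?_
  have hderiv : (fun q => fderiv ℝ (fun x => exp (g x)) q (e i)) =ᶠ[𝓝 p]
      fun q => exp (g q) * fderiv ℝ g q (e i) := by
    filter_upwards [eventually_differentiableAt_of_contDiffAt_two hg] with q hgq
    simp [fderiv_exp hgq]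
  have hg₀ := hg.differentiableAt two_ne_zero
  rw [hderiv.fderiv_eq, fderiv_fun_mul hg₀.exp (differentiableAt_fderiv_apply hg _),
    fderiv_exp hg₀]
  simp only [add_apply, smul_apply, smul_eq_mul]
  ring

theorem fderiv_div_apply (hg : DifferentiableAt ℝ g p) (hw : DifferentiableAt ℝ w p)
    (hw₀ : w p ≠ 0) (v : V) :
    fderiv ℝ (fun q => g q / w q) p v =
      fderiv ℝ g p v / w p - g p * fderiv ℝ w p v / w p ^ 2 := by
  have hinv : HasFDerivAt (fun q => (w q)⁻¹) (-(w p ^ 2)⁻¹ • fderiv ℝ w p) p :=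
    (hasDerivAt_inv hw₀).comp_hasFDerivAt p hw.hasFDerivAt
  simp only [div_eq_mul_inv, fderiv_fun_mul hg hinv.differentiableAt, hinv.fderiv, add_apply,
    smul_apply, smul_eq_mul]
  ring

theorem weightedLaplacian_eq (hw : DifferentiableAt ℝ w p) (hw₀ : w p ≠ 0)
    (hh : ContDiffAt ℝ 2 h p) :
    weightedLaplacian e w h p = frameLaplacian e h p / w p - gradInner e w h p / w p ^ 2 := by
  simp only [weightedLaplacian, frameLaplacian, gradInner, Finset.sum_div,
    ← Finset.sum_sub_distrib]
  refine Finset.sum_congr rfl fun i _ => ?_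
  rw [fderiv_div_apply (differentiableAt_fderiv_apply hh _) hw hw₀, mul_comm (fderiv ℝ w p _)]

end FrameCalculus

section MetricCoefficients

variable {V : Type*}

/-- The metric coefficient `f = e^{2F} = g₀₀`. -/
noncomputable def metricF (F : V → ℝ) : V → ℝ := fun q => exp (2 * F q)

/-- The metric coefficient `k = -e^{2F} A = -g₀₂`. -/
noncomputable def metricK (F A : V → ℝ) : V → ℝ := fun q => -exp (2 * F q) * A q

/-- The metric coefficient `l = -e^{2F} A² + e^{-2F} Π² = -g₂₂`. -/
noncomputable def metricL (F A Pt : V → ℝ) : V → ℝ :=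
  fun q => -exp (2 * F q) * A q ^ 2 + exp (-(2 * F q)) * Pt q ^ 2

theorem metricF_pos (F : V → ℝ) (p : V) : 0 < metricF F p := exp_pos _

theorem exp_four_mul_eq_metricF_sq (F : V → ℝ) (p : V) : exp (4 * F p) = metricF F p ^ 2 := by
  rw [metricF, ← exp_nat_mul]
  ring_nf

theorem metricK_eq (F A : V → ℝ) (p : V) : metricK F A p = -(metricF F p * A p) :=
  neg_mul _ _

theorem metricF_mul_metricL_add_metricK_sq (F A Pt : V → ℝ) (p : V) :
    metricF F p * metricL F A Pt p + metricK F A p ^ 2 = Pt p ^ 2 := by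
  simp only [metricF, metricK, metricL, exp_neg]
  field_simp
  ring

theorem metricK_eq_neg_one_mul (F A : V → ℝ) :
    metricK F A = fun q => -1 * (metricF F q * A q) := by
  funext q
  rw [metricK_eq, neg_one_mul]

end MetricCoefficients

section KillingBlock

variable {V ι : Type*} [NormedAddCommGroup V] [NormedSpace ℝ V] [Fintype ι]
  {e : ι → V} {F A Pt f k l u : V → ℝ} {p : V}

/-- The expression `L h + h Σ / Π³` with `L = div (∇· / Π)` and `Σ = ⟨f, l⟩ + ⟨k, k⟩`. Up to sign
and the factor `2 e^m / Π`, it is a Ricci component when `h` is one of `f`, `k`, `l`. -/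
noncomputable def killingRicci (e : ι → V) (Pt f k l h : V → ℝ) (p : V) : ℝ :=
  weightedLaplacian e Pt h p + h p * (gradInner e f l p + gradInner e k k p) / Pt p ^ 3

theorem contDiffAt_metricF {n : WithTop ℕ∞} (hF : ContDiffAt ℝ n F p) :
    ContDiffAt ℝ n (metricF F) p :=
  (contDiffAt_const.mul hF).exp

theorem contDiffAt_metricK {n : WithTop ℕ∞} (hF : ContDiffAt ℝ n F p) (hA : ContDiffAt ℝ n A p) :
    ContDiffAt ℝ n (metricK F A) p :=
  (contDiffAt_metricF hF).neg.mul hA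

theorem contDiffAt_metricL {n : WithTop ℕ∞} (hF : ContDiffAt ℝ n F p) (hA : ContDiffAt ℝ n A p)
    (hPt : ContDiffAt ℝ n Pt p) : ContDiffAt ℝ n (metricL F A Pt) p :=
  ((contDiffAt_metricF hF).neg.mul (hA.pow 2)).add
    ((contDiffAt_const.mul hF).neg.exp.mul (hPt.pow 2))

theorem gradInner_metricF_right (hF : DifferentiableAt ℝ F p) :
    gradInner e u (metricF F) p = 2 * metricF F p * gradInner e u F p := by
  unfold metricF
  rw [gradInner_exp_right (hF.const_mul 2), gradInner_const_mul_right hF]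
  ring

theorem frameLaplacian_metricF (hF : ContDiffAt ℝ 2 F p) :
    frameLaplacian e (metricF F) p =
      metricF F p * (2 * frameLaplacian e F p + 4 * gradInner e F F p) := by
  have hF₀ := hF.differentiableAt two_ne_zero
  unfold metricF
  rw [frameLaplacian_exp (contDiffAt_const.mul hF), frameLaplacian_const_mul hF,
    gradInner_const_mul_right hF₀, gradInner_comm, gradInner_const_mul_right hF₀]
  ring

theorem gradInner_metricK_right (hF : DifferentiableAt ℝ F p) (hA : DifferentiableAt ℝ A p) :
    gradInner e u (metricK F A) p =
      -metricF F p * (gradInner e u A p + 2 * A p * gradInner e u F p) := by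
  have hf : DifferentiableAt ℝ (metricF F) p := (hF.const_mul 2).exp
  rw [metricK_eq_neg_one_mul, gradInner_const_mul_right (hf.fun_mul hA), gradInner_mul_right hf hA,
    gradInner_metricF_right hF]
  ring

theorem frameLaplacian_metricK (hF : ContDiffAt ℝ 2 F p) (hA : ContDiffAt ℝ 2 A p) :
    frameLaplacian e (metricK F A) p = -metricF F p *
      (frameLaplacian e A p + 4 * gradInner e F A p
        + A p * (2 * frameLaplacian e F p + 4 * gradInner e F F p)) := by
  have hf := contDiffAt_metricF hF
  rw [metricK_eq_neg_one_mul, frameLaplacian_const_mul (hf.mul hA), frameLaplacian_mul hf hA,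
    frameLaplacian_metricF hF, gradInner_comm e (metricF F),
    gradInner_metricF_right (hF.differentiableAt two_ne_zero), gradInner_comm e A]
  ring

theorem gradInner_of_mul_add_sq_eq_sq (hf : DifferentiableAt ℝ f p) (hk : DifferentiableAt ℝ k p)
    (hl : DifferentiableAt ℝ l p) (hPt : DifferentiableAt ℝ Pt p)
    (hdet : ∀ q, f q * l q + k q ^ 2 = Pt q ^ 2) :
    f p * gradInner e u l p + l p * gradInner e u f p + 2 * k p * gradInner e u k p =
      2 * Pt p * gradInner e u Pt p := by
  rw [← gradInner_sq_right hPt, ← gradInner_mul_right hf hl, ← gradInner_sq_right hk,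
    ← gradInner_add_right (hf.fun_mul hl) (hk.fun_pow 2), funext hdet]

theorem frameLaplacian_of_mul_add_sq_eq_sq (hf : ContDiffAt ℝ 2 f p) (hk : ContDiffAt ℝ 2 k p)
    (hl : ContDiffAt ℝ 2 l p) (hPt : ContDiffAt ℝ 2 Pt p)
    (hdet : ∀ q, f q * l q + k q ^ 2 = Pt q ^ 2) :
    f p * frameLaplacian e l p + l p * frameLaplacian e f p + 2 * k p * frameLaplacian e k p
        + 2 * (gradInner e f l p + gradInner e k k p) =
      2 * Pt p * frameLaplacian e Pt p + 2 * gradInner e Pt Pt p := by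
  rw [← frameLaplacian_sq hPt, ← funext hdet, frameLaplacian_add (hf.mul hl) (hk.pow 2),
    frameLaplacian_mul hf hl, frameLaplacian_sq hk]
  ring

theorem killingRicci_det_combination (hf : ContDiffAt ℝ 2 f p) (hk : ContDiffAt ℝ 2 k p)
    (hl : ContDiffAt ℝ 2 l p) (hPt : ContDiffAt ℝ 2 Pt p) (hPt₀ : Pt p ≠ 0)
    (hdet : ∀ q, f q * l q + k q ^ 2 = Pt q ^ 2) :
    f p * killingRicci e Pt f k l l p + l p * killingRicci e Pt f k l f p
        + 2 * k p * killingRicci e Pt f k l k p = 2 * frameLaplacian e Pt p := by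
  have hPt' := hPt.differentiableAt two_ne_zero
  have hgrad := gradInner_of_mul_add_sq_eq_sq (e := e) (u := Pt) (hf.differentiableAt two_ne_zero)
    (hk.differentiableAt two_ne_zero) (hl.differentiableAt two_ne_zero) hPt' hdet
  have hlap := frameLaplacian_of_mul_add_sq_eq_sq (e := e) hf hk hl hPt hdet
  simp only [killingRicci, weightedLaplacian_eq hPt' hPt₀, hf, hk, hl]
  generalize gradInner e f l p + gradInner e k k p = S at hlap ⊢
  field_simp
  linear_combination Pt p ^ 2 * hlap - Pt p * hgrad + 2 * S * hdet p

theorem gradInner_metricF_metricL_add_metricK (hF : DifferentiableAt ℝ F p)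
    (hA : DifferentiableAt ℝ A p) (hPt : DifferentiableAt ℝ Pt p) :
    gradInner e (metricF F) (metricL F A Pt) p + gradInner e (metricK F A) (metricK F A) p =
      metricF F p ^ 2 * gradInner e A A p + 4 * Pt p * gradInner e Pt F p
        - 4 * Pt p ^ 2 * gradInner e F F p := by
  have hf : DifferentiableAt ℝ (metricF F) p := (hF.const_mul 2).exp
  have hk : DifferentiableAt ℝ (metricK F A) p := hf.neg.mul hA
  have hl : DifferentiableAt ℝ (metricL F A Pt) p :=
    (hf.neg.mul (hA.pow 2)).add ((hF.const_mul 2).neg.exp.mul (hPt.pow 2))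
  have hdet := metricF_mul_metricL_add_metricK_sq F A Pt
  have hgrad := gradInner_of_mul_add_sq_eq_sq (e := e) (u := metricF F) hf hk hl hPt hdet
  simp only [gradInner_comm e (metricF F) F, gradInner_comm e (metricF F) Pt,
    gradInner_comm e (metricF F) A, gradInner_comm e (metricK F A) F,
    gradInner_comm e (metricK F A) A,
    gradInner_metricF_right hF, gradInner_metricK_right hF hA, gradInner_comm e A F,
    metricK_eq] at hgrad hdet ⊢
  refine mul_left_cancel₀ (metricF_pos F p).ne' ?_
  linear_combination hgrad - 4 * metricF F p * gradInner e F F p * hdet p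

theorem killingRicci_metricF (hF : ContDiffAt ℝ 2 F p) (hA : DifferentiableAt ℝ A p)
    (hPt : DifferentiableAt ℝ Pt p) (hPt₀ : Pt p ≠ 0) :
    killingRicci e Pt (metricF F) (metricK F A) (metricL F A Pt) (metricF F) p =
      2 * metricF F p / Pt p * (frameLaplacian e F p + 1 / Pt p * gradInner e Pt F p
        + metricF F p ^ 2 / (2 * Pt p ^ 2) * gradInner e A A p) := by
  have hF' := hF.differentiableAt two_ne_zero
  rw [killingRicci, gradInner_metricF_metricL_add_metricK hF' hA hPt,
    weightedLaplacian_eq hPt hPt₀ (contDiffAt_metricF hF), frameLaplacian_metricF hF,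
    gradInner_metricF_right hF']
  field_simp
  ring

theorem killingRicci_metricK_add (hF : ContDiffAt ℝ 2 F p) (hA : ContDiffAt ℝ 2 A p)
    (hPt : DifferentiableAt ℝ Pt p) (hPt₀ : Pt p ≠ 0) (l : V → ℝ) :
    killingRicci e Pt (metricF F) (metricK F A) l (metricK F A) p
        + A p * killingRicci e Pt (metricF F) (metricK F A) l (metricF F) p =
      -(metricF F p / Pt p) * (frameLaplacian e A p - 1 / Pt p * gradInner e Pt A p
        + 4 * gradInner e F A p) := by
  have hF' := hF.differentiableAt two_ne_zero
  rw [killingRicci, killingRicci, metricK_eq F A p,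
    weightedLaplacian_eq hPt hPt₀ (contDiffAt_metricF hF),
    weightedLaplacian_eq hPt hPt₀ (contDiffAt_metricK hF hA), frameLaplacian_metricF hF,
    frameLaplacian_metricK hF hA, gradInner_metricF_right hF',
    gradInner_metricK_right hF' (hA.differentiableAt two_ne_zero)]
  field_simp
  ring

end KillingBlock

section StressCombinations

variable {X ω P Pt f k l A : ℝ}

/-- The source component `S₀₀` at a point, with `X = (ε + P) e^{-2G}` and `ω = Ω / c`. -/
noncomputable def stress00 (X ω P Pt f k : ℝ) : ℝ :=
  1 / 2 * X * ((f - ω * k) ^ 2 + ω ^ 2 * Pt ^ 2) + P * f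

/-- The source component `S₀₂` at a point, with `X` and `ω` as in `stress00`. -/
noncomputable def stress02 (X ω P f k l : ℝ) : ℝ :=
  1 / 2 * X * (-(k * f) - 2 * ω * f * l + ω ^ 2 * k * l) - P * k

/-- The source component `S₂₂` at a point, with `X` and `ω` as in `stress00`. -/
noncomputable def stress22 (X ω P Pt k l : ℝ) : ℝ :=
  1 / 2 * X * (Pt ^ 2 + (k + ω * l) ^ 2) - P * l

theorem stress00_of_eq_neg_mul (hf : f ≠ 0) (hk : k = -(f * A)) :
    stress00 X ω P Pt f k =
      f / 2 * (X * (f * (1 + ω * A) ^ 2 + f⁻¹ * ω ^ 2 * Pt ^ 2) + 2 * P) := by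
  subst hk
  unfold stress00
  field_simp
  ring

theorem stress02_sub_mul_stress00 (hk : k = -(f * A)) (hdet : f * l + k ^ 2 = Pt ^ 2) :
    stress02 X ω P f k l - A * stress00 X ω P Pt f k = -X * ω * Pt ^ 2 * (1 + ω * A) := by
  subst hk
  unfold stress02 stress00
  linear_combination (-X * ω * (1 + ω * A / 2)) * hdet

theorem stress_det_combination (hdet : f * l + k ^ 2 = Pt ^ 2) :
    f * stress22 X ω P Pt k l - l * stress00 X ω P Pt f k + 2 * k * stress02 X ω P f k l =
      -2 * P * Pt ^ 2 := by
  unfold stress00 stress02 stress22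
  linear_combination (-2 * P - X / 2 * (f - ω ^ 2 * l)) * hdet

end StressCombinations

section ReducedEquations

variable {V ι : Type*} [NormedAddCommGroup V] [NormedSpace ℝ V] [Fintype ι]
  {e : ι → V} {F A Pt : V → ℝ} {p : V} {κ M X ω P : ℝ}

/-- The equations (36a), (36b), (36c) at the point `p`, with the Ricci components eliminated. The
other data enter only through the numbers `M = e^m`, `X = (ε + P) e^{-2G}`, `ω = Ω / c` and `P`. -/
structure KillingEinsteinEquations (e : ι → V) (F A Pt : V → ℝ) (κ M X ω P : ℝ) (p : V) :
    Prop where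
  eq00 : 2 * M / Pt p * (κ * stress00 X ω P (Pt p) (metricF F p) (metricK F A p)) =
    killingRicci e Pt (metricF F) (metricK F A) (metricL F A Pt) (metricF F) p
  eq02 : -(2 * M / Pt p *
      (κ * stress02 X ω P (metricF F p) (metricK F A p) (metricL F A Pt p))) =
    killingRicci e Pt (metricF F) (metricK F A) (metricL F A Pt) (metricK F A) p
  eq22 : -(2 * M / Pt p *
      (κ * stress22 X ω P (Pt p) (metricK F A p) (metricL F A Pt p))) =
    killingRicci e Pt (metricF F) (metricK F A) (metricL F A Pt) (metricL F A Pt) p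

namespace KillingEinsteinEquations

theorem reduced_equation_F (hF : ContDiffAt ℝ 2 F p) (hA : DifferentiableAt ℝ A p)
    (hPt : DifferentiableAt ℝ Pt p) (hPt₀ : Pt p ≠ 0)
    (hEin : KillingEinsteinEquations e F A Pt κ M X ω P p) :
    frameLaplacian e F p + 1 / Pt p * gradInner e Pt F p
        + metricF F p ^ 2 / (2 * Pt p ^ 2) * gradInner e A A p =
      κ / 2 * M * (X * (metricF F p * (1 + ω * A p) ^ 2
        + (metricF F p)⁻¹ * ω ^ 2 * Pt p ^ 2) + 2 * P) := by
  have hf₀ := (metricF_pos F p).ne'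
  have h00 := hEin.eq00
  rw [killingRicci_metricF hF hA hPt hPt₀, stress00_of_eq_neg_mul hf₀ (metricK_eq F A p)] at h00
  refine mul_left_cancel₀ (div_ne_zero (mul_ne_zero two_ne_zero hf₀) hPt₀) ?_
  linear_combination -h00

theorem reduced_equation_A (hF : ContDiffAt ℝ 2 F p) (hA : ContDiffAt ℝ 2 A p)
    (hPt : DifferentiableAt ℝ Pt p) (hPt₀ : Pt p ≠ 0)
    (hEin : KillingEinsteinEquations e F A Pt κ M X ω P p) :
    frameLaplacian e A p - 1 / Pt p * gradInner e Pt A p + 4 * gradInner e F A p =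
      -(2 * κ) * M * X * ((metricF F p)⁻¹ * ω * Pt p ^ 2 * (1 + ω * A p)) := by
  have hf₀ := (metricF_pos F p).ne'
  have hricci := killingRicci_metricK_add (e := e) hF hA hPt hPt₀ (metricL F A Pt)
  have hstress := stress02_sub_mul_stress00 (X := X) (ω := ω) (P := P) (metricK_eq F A p)
    (metricF_mul_metricL_add_metricK_sq F A Pt p)
  rw [← hEin.eq02, ← hEin.eq00] at hricci
  refine mul_left_cancel₀ (div_ne_zero hf₀ hPt₀) ?_
  have hcancel : metricF F p * (metricF F p)⁻¹ = 1 := mul_inv_cancel₀ hf₀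
  linear_combination hricci + 2 * M / Pt p * κ * hstress
    + 2 * κ * M * X * ω * Pt p ^ 2 * (1 + ω * A p) / Pt p * hcancel

theorem reduced_equation_Pt (hF : ContDiffAt ℝ 2 F p) (hA : ContDiffAt ℝ 2 A p)
    (hPt : ContDiffAt ℝ 2 Pt p) (hPt₀ : Pt p ≠ 0)
    (hEin : KillingEinsteinEquations e F A Pt κ M X ω P p) :
    frameLaplacian e Pt p = 2 * κ * M * P * Pt p := by
  have hdet := metricF_mul_metricL_add_metricK_sq F A Pt
  have hricci := killingRicci_det_combination (e := e) (contDiffAt_metricF hF)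
    (contDiffAt_metricK hF hA) (contDiffAt_metricL hF hA hPt) hPt hPt₀ hdet
  have hstress := stress_det_combination (X := X) (ω := ω) (P := P) (hdet p)
  rw [← hEin.eq00, ← hEin.eq02, ← hEin.eq22] at hricci
  have hcancel : Pt p ^ 2 / Pt p = Pt p := by field_simp
  linear_combination -hricci / 2 - M / Pt p * κ * hstress + 2 * κ * M * P * hcancel

end KillingEinsteinEquations

theorem stmt_0_general (hF : ContDiffAt ℝ 2 F p) (hA : ContDiffAt ℝ 2 A p)
    (hPt : ContDiffAt ℝ 2 Pt p) (hPt₀ : Pt p ≠ 0)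
    (hEin : KillingEinsteinEquations e F A Pt κ M X ω P p) :
    frameLaplacian e F p + 1 / Pt p * gradInner e Pt F p
        + exp (4 * F p) / (2 * Pt p ^ 2) * gradInner e A A p =
      κ / 2 * M * (X * (exp (2 * F p) * (1 + ω * A p) ^ 2
        + exp (-(2 * F p)) * ω ^ 2 * Pt p ^ 2) + 2 * P) ∧
    frameLaplacian e A p - 1 / Pt p * gradInner e Pt A p + 4 * gradInner e F A p =
      -(2 * κ) * M * X * (exp (-(2 * F p)) * ω * Pt p ^ 2 * (1 + ω * A p)) ∧
    frameLaplacian e Pt p = 2 * κ * M * P * Pt p := by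
  have hA' := hA.differentiableAt two_ne_zero
  have hPt' := hPt.differentiableAt two_ne_zero
  rw [exp_four_mul_eq_metricF_sq, exp_neg]
  exact ⟨hEin.reduced_equation_F hF hA' hPt' hPt₀, hEin.reduced_equation_A hF hA hPt' hPt₀,
    hEin.reduced_equation_Pt hF hA hPt hPt₀⟩

end ReducedEquations

section Plane

variable (g h Pt f k l : ℝ × ℝ → ℝ) (p : ℝ × ℝ)

/-- The standard basis of the `(ϖ, z)` plane, for which the directional derivatives are `d1` and
`d3`. -/
def planeFrame : Fin 2 → ℝ × ℝ := ![(1, 0), (0, 1)]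

theorem gradInner_planeFrame :
    gradInner planeFrame g h p = d1 g p * d1 h p + d3 g p * d3 h p :=
  Fin.sum_univ_two _

theorem frameLaplacian_planeFrame :
    frameLaplacian planeFrame h p = d1 (d1 h) p + d3 (d3 h) p :=
  Fin.sum_univ_two _

theorem weightedLaplacian_planeFrame :
    weightedLaplacian planeFrame Pt h p =
      d1 (fun q => d1 h q / Pt q) p + d3 (fun q => d3 h q / Pt q) p :=
  Fin.sum_univ_two _

theorem killingRicci_planeFrame :
    killingRicci planeFrame Pt f k l h p =
      d1 (fun q => d1 h q / Pt q) p + d3 (fun q => d3 h q / Pt q) p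
        + h p * (d1 f p * d1 l p + d3 f p * d3 l p + d1 k p ^ 2 + d3 k p ^ 2) / Pt p ^ 3 := by
  rw [killingRicci, weightedLaplacian_planeFrame, gradInner_planeFrame, gradInner_planeFrame]
  ring

end Plane

/-- **(36a)(36b)(36c) ⟹ (N.9a)(N.9b)(N.9c).** -/
theorem stmt_0
    (c κ : ℝ) (hc : 0 < c) (hκ : 0 < κ)
    (O : Set (ℝ × ℝ)) (hO : IsOpen O) (hOw : ∀ p ∈ O, 0 < p.1)
    (F A Pt K ρ P Ω : ℝ × ℝ → ℝ)
    (hF : ContDiffOn ℝ 2 F O) (hA : ContDiffOn ℝ 2 A O)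
    (hPt : ContDiffOn ℝ 2 Pt O) (hK : ContDiffOn ℝ 2 K O)
    (hPtpos : ∀ p ∈ O, 0 < Pt p)
    (hρc : ContinuousOn ρ O) (hPc : ContinuousOn P O) (hΩc : ContinuousOn Ω O)
    (hρ0 : ∀ p ∈ O, 0 ≤ ρ p) (hP0 : ∀ p ∈ O, 0 ≤ P p)
    (ε f k m l E Sg : ℝ × ℝ → ℝ)
    (hε : ε = fun p => c ^ 2 * ρ p)
    (hf : f = fun p => exp (2 * F p))
    (hk : k = fun p => -exp (2 * F p) * A p)
    (hm : m = fun p => 2 * (-F p + K p))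
    (hl : l = fun p => -exp (2 * F p) * (A p) ^ 2 + exp (-(2 * F p)) * (Pt p) ^ 2)
    (hE : E = fun p => exp (2 * F p) * (1 + Ω p * A p / c) ^ 2
      - exp (-(2 * F p)) * (Ω p ^ 2 / c ^ 2) * (Pt p) ^ 2)
    (hEpos : ∀ p ∈ O, 0 < E p)
    (hSg : Sg = fun p => d1 f p * d1 l p + d3 f p * d3 l p + (d1 k p) ^ 2 + (d3 k p) ^ 2)
    (R00 R02 R22 : ℝ × ℝ → ℝ)
    (hR00 : ∀ p ∈ O, (2 * exp (m p) / Pt p) * R00 p =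
      d1 (fun q => d1 f q / Pt q) p + d3 (fun q => d3 f q / Pt q) p + f p * Sg p / (Pt p) ^ 3)
    (hR02 : ∀ p ∈ O, -((2 * exp (m p) / Pt p) * R02 p) =
      d1 (fun q => d1 k q / Pt q) p + d3 (fun q => d3 k q / Pt q) p + k p * Sg p / (Pt p) ^ 3)
    (hR22 : ∀ p ∈ O, -((2 * exp (m p) / Pt p) * R22 p) =
      d1 (fun q => d1 l q / Pt q) p + d3 (fun q => d3 l q / Pt q) p + l p * Sg p / (Pt p) ^ 3)
    (S00 S02 S22 : ℝ × ℝ → ℝ)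
    (hS00 : S00 = fun p => (1/2) * (ε p + P p) * (E p)⁻¹
      * ((f p - (Ω p / c) * k p) ^ 2 + (Ω p ^ 2 / c ^ 2) * (Pt p) ^ 2) + P p * f p)
    (hS02 : S02 = fun p => (1/2) * (ε p + P p) * (E p)⁻¹
      * (-(k p * f p) - 2 * (Ω p / c) * f p * l p + (Ω p ^ 2 / c ^ 2) * k p * l p) - P p * k p)
    (hS22 : S22 = fun p => (1/2) * (ε p + P p) * (E p)⁻¹
      * ((Pt p) ^ 2 + (k p + (Ω p / c) * l p) ^ 2) - P p * l p)
    (h36a : ∀ p ∈ O, R00 p = κ * S00 p)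
    (h36b : ∀ p ∈ O, R02 p = κ * S02 p)
    (h36c : ∀ p ∈ O, R22 p = κ * S22 p) :
    (∀ p ∈ O,
      d1 (d1 F) p + d3 (d3 F) p
        + (1 / Pt p) * (d1 Pt p * d1 F p + d3 Pt p * d3 F p)
        + (exp (4 * F p) / (2 * (Pt p) ^ 2)) * ((d1 A p) ^ 2 + (d3 A p) ^ 2)
      = (κ / 2) * exp (2 * (-F p + K p)) *
          ((ε p + P p) * (exp (2 * F p) * (1 + Ω p * A p / c) ^ 2
            + exp (-(2 * F p)) * (Ω p ^ 2 / c ^ 2) * (Pt p) ^ 2) / E p + 2 * P p)) ∧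
    (∀ p ∈ O,
      d1 (d1 A) p + d3 (d3 A) p
        - (1 / Pt p) * (d1 Pt p * d1 A p + d3 Pt p * d3 A p)
        + 4 * (d1 F p * d1 A p + d3 F p * d3 A p)
      = -(2 * κ) * exp (2 * (-F p + K p)) * (ε p + P p) *
          (exp (-(2 * F p)) * (Ω p / c) * (Pt p) ^ 2 * (1 + Ω p * A p / c)) / E p) ∧
    (∀ p ∈ O,
      d1 (d1 Pt) p + d3 (d3 Pt) p
      = 2 * κ * exp (2 * (-F p + K p)) * P p * Pt p) := by
  obtain rfl : f = metricF F := hf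
  obtain rfl : k = metricK F A := hk
  obtain rfl : l = metricL F A Pt := hl
  subst hm hSg hS00 hS02 hS22
  have einstein (p : ℝ × ℝ) (hp : p ∈ O) :
      KillingEinsteinEquations planeFrame F A Pt κ (exp (2 * (-F p + K p)))
        ((ε p + P p) * (E p)⁻¹) (Ω p / c) (P p) p := by
    constructor
    · rw [killingRicci_planeFrame, ← hR00 p hp, h36a p hp, stress00]; ring
    · rw [killingRicci_planeFrame, ← hR02 p hp, h36b p hp, stress02]; ring
    · rw [killingRicci_planeFrame, ← hR22 p hp, h36c p hp, stress22]; ring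
  have reduced (p : ℝ × ℝ) (hp : p ∈ O) :=
    have hOp := hO.mem_nhds hp
    stmt_0_general (hF.contDiffAt hOp) (hA.contDiffAt hOp) (hPt.contDiffAt hOp) (hPtpos p hp).ne'
      (einstein p hp)
  simp only [frameLaplacian_planeFrame, gradInner_planeFrame] at reduced
  refine ⟨fun p hp => ?_, fun p hp => ?_, fun p hp => (reduced p hp).2.2⟩
  · linear_combination (reduced p hp).1
  · linear_combination (reduced p hp).2.1
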